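/- Let R ⊆ ℝⁿ be a compact convex set, let g be twice continuously differentiable on an open set containing R, let ε > 0, and let f be a layered feedforward network on ℝⁿ of depth d with widths ω₁, …, ω_d whose activation σ is piecewise linear with t pieces, such that f is an ε-approximation of g on R. Then for all x, y ∈ R, ((t − 1)·ω + 1)^d ≥ (‖x − y‖₂ / (4√ε)) · Ψ(g, x, y), where ω = (ω₁ + … + ω_d)/d. -/

import Mathlib

noncomputable def hess {n : ℕ} (g : EuclideanSpace ℝ (Fin n) → ℝ)
    (z : EuclideanSpace ℝ (Fin n)) : Matrix (Fin n) (Fin n) ℝ :=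
  fun i j => iteratedFDeriv ℝ 2 g z ![EuclideanSpace.single i 1, EuclideanSpace.single j 1]

noncomputable def lamMax {n : ℕ} (A : Matrix (Fin n) (Fin n) ℝ) : ℝ := sSup (spectrum ℝ A)

noncomputable def lamMin {n : ℕ} (A : Matrix (Fin n) (Fin n) ℝ) : ℝ := sInf (spectrum ℝ A)

noncomputable def Psi {n : ℕ} (g : EuclideanSpace ℝ (Fin n) → ℝ)
    (x y : EuclideanSpace ℝ (Fin n)) : ℝ :=
  Real.sqrt (sInf ((fun α : ℝ =>
      max 0 (Real.sign (lamMax (hess g ((1 - α) • x + α • y)) *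
          lamMin (hess g ((1 - α) • x + α • y))) *
        min |lamMax (hess g ((1 - α) • x + α • y))|
            |lamMin (hess g ((1 - α) • x + α • y))|)) '' Set.Icc (0 : ℝ) 1))

/-- `σ : ℝ → ℝ` is piecewise linear with `t` pieces: `ℝ` is the union of `t` pairwise
disjoint nonempty intervals on each of which `σ` coincides with an affine function. -/
def PiecewiseLinear (σ : ℝ → ℝ) (t : ℕ) : Prop :=
  ∃ I : Fin t → Set ℝ,
    (∀ i, (I i).Nonempty) ∧ (∀ i, Convex ℝ (I i)) ∧
    (Pairwise fun i j => Disjoint (I i) (I j)) ∧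
    (⋃ i, I i) = Set.univ ∧
    ∀ i, ∃ a b : ℝ, ∀ z ∈ I i, σ z = a * z + b

/-- A layered feedforward network on `ℝⁿ`, allowing connections from all earlier layers
and from the input.  Layers are indexed by `0, …, depth - 1`. -/
structure LayeredNet (n : ℕ) where
  depth : ℕ
  width : ℕ → ℕ
  Win : (i : ℕ) → Fin (width i) → Fin n → ℝ
  W : (i j : ℕ) → Fin (width i) → Fin (width j) → ℝ
  b : (i : ℕ) → Fin (width i) → ℝ
  cin : Fin n → ℝ
  c : (i : ℕ) → Fin (width i) → ℝ
  c0 : ℝ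

/-- The output of the hidden units in layer `i`. -/
noncomputable def LayeredNet.layer {n : ℕ} (N : LayeredNet n) (σ : ℝ → ℝ)
    (x : EuclideanSpace ℝ (Fin n)) : (i : ℕ) → Fin (N.width i) → ℝ
  | i => fun k => σ ((∑ m, N.Win i k m * x m) +
      (∑ j : Fin i, ∑ m, N.W i j k m * N.layer σ x j m) + N.b i k)
  termination_by i => i
  decreasing_by exact j.isLt

/-- The (real-valued) output of the network with activation `σ`. -/
noncomputable def LayeredNet.eval {n : ℕ} (N : LayeredNet n) (σ : ℝ → ℝ)
    (x : EuclideanSpace ℝ (Fin n)) : ℝ :=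
  (∑ m, N.cin m * x m) + (∑ i ∈ Finset.range N.depth, ∑ m, N.c i m * N.layer σ x i m) + N.c0

/-- The number of hidden units `|H| = ω₁ + ⋯ + ω_d`. -/
def LayeredNet.numHidden {n : ℕ} (N : LayeredNet n) : ℕ :=
  ∑ i ∈ Finset.range N.depth, N.width i


lemma amgm (d : ℕ) (hd : 1 ≤ d) (z : ℕ → ℝ) (hz : ∀ i, 0 ≤ z i) :
    ∏ i ∈ Finset.range d, z i ≤ ((∑ i ∈ Finset.range d, z i) / d) ^ d := by
  have hd0 : (0:ℝ) < d := by exact_mod_cast hd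
  have h := Real.geom_mean_le_arith_mean (Finset.range d) (fun _ => (1:ℝ)) z (by simp) (by simpa using (show 0 < d by omega)) (fun i _ => hz i)
  simp only [Real.rpow_one, Finset.sum_const, Finset.card_range, nsmul_eq_mul, mul_one, one_mul] at h
  have hp : 0 ≤ ∏ i ∈ Finset.range d, z i := Finset.prod_nonneg (fun i _ => hz i)
  calc ∏ i ∈ Finset.range d, z i = ((∏ i ∈ Finset.range d, z i) ^ ((d:ℝ)⁻¹)) ^ d := by
        rw [Real.rpow_inv_natCast_pow hp (by omega)]
    _ ≤ _ := by gcongr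

lemma exists_lab {σ : ℝ → ℝ} {t : ℕ} (ht : 1 ≤ t) (I : Fin t → Set ℝ)
    (hne : ∀ i, (I i).Nonempty) (hc : ∀ i, Convex ℝ (I i))
    (hdis : Pairwise fun i j => Disjoint (I i) (I j)) (hU : (⋃ i, I i) = Set.univ)
    (hlin : ∀ i, ∃ a b : ℝ, ∀ z ∈ I i, σ z = a * z + b) :
    ∃ lab : ℝ → ℕ, Monotone lab ∧ (∀ z, lab z ≤ t - 1) ∧
      ∀ k, ∃ a b : ℝ, ∀ z, lab z = k → σ z = a * z + b := by
  classical
  choose r hr using hne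
  have hx : ∀ z, ∃ i, z ∈ I i := fun z => by
    have : z ∈ ⋃ i, I i := by rw [hU]; trivial
    simpa using this
  choose idx hidx using hx
  have hkey : ∀ i j z w, i ≠ j → z ∈ I i → w ∈ I j → z ≤ w → r i < r j := by
    intro i j z w hij hz hw hzw
    by_contra hcon
    push Not at hcon
    have hd := Set.disjoint_left.1 (hdis hij)
    have oi := (hc i).ordConnected
    have oj := (hc j).ordConnected
    rcases le_total (r i) w with h1 | h1
    · -- r j ≤ r i ≤ w
      exact hd (hr i) (oj.out (hr j) hw ⟨hcon, h1⟩)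
    · exact hd (oi.out hz (hr i) ⟨hzw, h1⟩) hw
  have hmono : ∀ z w, z ≤ w → r (idx z) ≤ r (idx w) := by
    intro z w h
    by_cases e : idx z = idx w
    · rw [e]
    · exact (hkey _ _ z w e (hidx z) (hidx w) h).le
  have hinj : Function.Injective r := by
    intro i j h
    by_contra hij
    exact Set.disjoint_left.1 (hdis hij) (hr i) (h ▸ hr j)
  let rank : Fin t → ℕ := fun i => (Finset.univ.filter (fun j => r j < r i)).card
  have hrank : ∀ i j, r i < r j → rank i < rank j := by
    intro i j h
    apply Finset.card_lt_card
    rw [Finset.ssubset_iff_of_subset]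
    · exact ⟨i, by simp [h], by simp⟩
    · intro k hk
      simp only [Finset.mem_filter, Finset.mem_univ, true_and] at hk ⊢
      exact hk.trans h
  have hrinj : ∀ i j, rank i = rank j → i = j := by
    intro i j h
    rcases lt_trichotomy (r i) (r j) with h1 | h1 | h1
    · have := hrank _ _ h1; omega
    · exact hinj h1
    · have := hrank _ _ h1; omega
  refine ⟨fun z => rank (idx z), ?_, ?_, ?_⟩
  · intro z w h
    rcases (hmono z w h).lt_or_eq with h1 | h1
    · exact (hrank _ _ h1).le
    · simp [hinj h1]
  · intro z
    have : rank (idx z) < (Finset.univ : Finset (Fin t)).card := by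
      apply Finset.card_lt_card
      rw [Finset.ssubset_iff_of_subset (Finset.subset_univ _)]
      exact ⟨idx z, by simp, by simp⟩
    simp at this
    show rank (idx z) ≤ t - 1
    omega
  · intro k
    by_cases h : ∃ i, rank i = k
    · obtain ⟨i, hi⟩ := h
      obtain ⟨a, b, hab⟩ := hlin i
      refine ⟨a, b, fun z hz => hab z ?_⟩
      rw [← hrinj _ _ (hz.trans hi.symm)]
      exact hidx z
    · exact ⟨0, 0, fun z hz => absurd ⟨_, hz⟩ h⟩

/-- simultaneous refinement for one layer -/
lemma refine_layer {σ : ℝ → ℝ} {T : ℕ} (lab : ℝ → ℕ) (hmono : Monotone lab)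
    (hle : ∀ z, lab z ≤ T) (hl : ∀ k, ∃ a b : ℝ, ∀ z, lab z = k → σ z = a * z + b)
    (w : ℕ) (a b : Fin w → ℝ) :
    ∃ M : ℝ → Fin (T * w + 1), Monotone M ∧
      ∀ k, ∀ m, ∃ a' b' : ℝ, ∀ s, M s = k → σ (a m * s + b m) = a' * s + b' := by
  classical
  let L : Fin w → ℝ → ℕ := fun m s =>
    if 0 ≤ a m then lab (a m * s + b m) else T - lab (a m * s + b m)
  have hLm : ∀ m, Monotone (L m) := by
    intro m s s' h
    simp only [L]
    split_ifs with h0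
    · exact hmono (by gcongr)
    · have : lab (a m * s' + b m) ≤ lab (a m * s + b m) := hmono (by nlinarith)
      omega
  have hLle : ∀ m s, L m s ≤ T := by
    intro m s
    simp only [L]
    split_ifs
    · exact hle _
    · omega
  have hLeq : ∀ m s s', L m s = L m s' → lab (a m * s + b m) = lab (a m * s' + b m) := by
    intro m s s' h
    simp only [L] at h
    have := hle (a m * s + b m)
    have := hle (a m * s' + b m)
    split_ifs at h <;> omega
  have hsum : ∀ s, ∑ m, L m s < T * w + 1 := by
    intro s
    have := Finset.sum_le_card_nsmul Finset.univ (fun m => L m s) T (fun m _ => hLle m s)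
    simp at this
    rw [mul_comm] at this
    omega
  have hconst : ∀ s s', s ≤ s' → ∑ m, L m s = ∑ m, L m s' → ∀ m, L m s = L m s' := by
    intro s s' h e m
    exact (Finset.sum_eq_sum_iff_of_le (fun i _ => hLm i h)).1 e m (Finset.mem_univ m)
  refine ⟨fun s => ⟨∑ m, L m s, hsum s⟩, ?_, ?_⟩
  · intro s s' h
    show ∑ m, L m s ≤ ∑ m, L m s'
    exact Finset.sum_le_sum (fun m _ => hLm m h)
  · intro k m
    by_cases hk : ∃ s₀, (⟨∑ m, L m s₀, hsum s₀⟩ : Fin (T * w + 1)) = k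
    · obtain ⟨s₀, hs₀⟩ := hk
      obtain ⟨p, q, hpq⟩ := hl (lab (a m * s₀ + b m))
      refine ⟨p * a m, p * b m + q, fun s hs => ?_⟩
      have e : ∑ m, L m s = ∑ m, L m s₀ := by
        have := hs.trans hs₀.symm
        exact congrArg Fin.val this
      have e' : L m s = L m s₀ := by
        rcases le_total s s₀ with h | h
        · exact hconst _ _ h e m
        · exact (hconst _ _ h e.symm m).symm
      rw [hpq _ (hLeq _ _ _ e')]
      ring
    · exact ⟨0, 0, fun s hs => absurd ⟨s, hs⟩ hk⟩

/-- midpoint bound -/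
lemma midpoint_strong (G G' G'' : ℝ → ℝ) (c : ℝ)
    (h1 : ∀ s ∈ Set.Icc (0:ℝ) 1, HasDerivAt G (G' s) s)
    (h2 : ∀ s ∈ Set.Icc (0:ℝ) 1, HasDerivAt G' (G'' s) s)
    (hc : ∀ s ∈ Set.Icc (0:ℝ) 1, c ≤ G'' s) (a b : ℝ) (ha : a ∈ Set.Icc (0:ℝ) 1)
    (hb : b ∈ Set.Icc (0:ℝ) 1) :
    c / 4 * (b - a) ^ 2 ≤ G a + G b - 2 * G ((a + b) / 2) := by
  have hconv : ConvexOn ℝ (Set.Icc (0:ℝ) 1) (fun s => G s - c / 2 * s ^ 2) := by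
    have hd : ∀ s ∈ Set.Icc (0:ℝ) 1, HasDerivAt (fun s => G s - c / 2 * s ^ 2) (G' s - c * s) s := by
      intro s hs
      have := (h1 s hs).sub (((hasDerivAt_id s).pow 2).const_mul (c / 2))
      refine this.congr_deriv ?_
      simp; ring
    refine convexOn_of_hasDerivWithinAt2_nonneg (f' := fun s => G' s - c * s)
      (f'' := fun s => G'' s - c) (convex_Icc _ _)
      (fun s hs => (hd s hs).continuousAt.continuousWithinAt) ?_ ?_ ?_
    · intro s hs
      exact (hd s (interior_subset hs)).hasDerivWithinAt
    · intro s hs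
      have := (h2 s (interior_subset hs)).sub ((hasDerivAt_id s).const_mul c)
      rw [mul_one] at this
      exact this.hasDerivWithinAt
    · intro s hs
      have := hc s (interior_subset hs)
      linarith
  have := hconv.2 ha hb (show (0:ℝ) ≤ 1/2 by norm_num) (show (0:ℝ) ≤ 1/2 by norm_num) (by norm_num)
  simp only [smul_eq_mul] at this
  rw [show 1/2 * a + 1/2 * b = (a + b) / 2 by ring] at this
  nlinarith

lemma quad_lower {n : ℕ} (A : Matrix (Fin n) (Fin n) ℝ) (hA : A.IsHermitian) (v : Fin n → ℝ)
    (c : ℝ) (hc : ∀ μ ∈ spectrum ℝ A, c ≤ μ) : c * (v ⬝ᵥ v) ≤ v ⬝ᵥ (A.mulVec v) := by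
  have hp : (A - algebraMap ℝ _ c).PosSemidef := by
    rw [Matrix.posSemidef_iff_isHermitian_and_spectrum_nonneg]
    refine ⟨hA.sub ?_, ?_⟩
    · rw [Matrix.algebraMap_eq_diagonal]
      exact Matrix.isHermitian_diagonal _
    · intro μ hμ
      rw [← spectrum.sub_singleton_eq] at hμ
      obtain ⟨ν, hν, _, rfl, rfl⟩ := hμ
      have := hc ν hν
      show 0 ≤ ν - _
      simpa using this
  have := hp.dotProduct_mulVec_nonneg v
  simp only [star_trivial, Matrix.sub_mulVec, dotProduct_sub, Algebra.algebraMap_eq_smul_one, Matrix.smul_mulVec, Matrix.one_mulVec, dotProduct_smul, smul_eq_mul] at this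
  linarith

lemma net_pieces {n : ℕ} (N : LayeredNet n) {σ : ℝ → ℝ} {T : ℕ} (lab : ℝ → ℕ)
    (hmono : Monotone lab)
    (hle : ∀ z, lab z ≤ T) (hl : ∀ k, ∃ a b : ℝ, ∀ z, lab z = k → σ z = a * z + b)
    (x y : EuclideanSpace ℝ (Fin n)) (i : ℕ) :
    ∃ (P : ℕ) (C : ℝ → Fin P), P = ∏ l ∈ Finset.range i, (T * N.width l + 1) ∧
      (∀ k, (C ⁻¹' {k}).OrdConnected) ∧
      ∀ k, ∀ l < i, ∀ m, ∃ a b : ℝ, ∀ s, C s = k →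
        N.layer σ ((1 - s) • x + s • y) l m = a * s + b := by
  induction i with
  | zero =>
    refine ⟨1, fun _ => 0, by simp, ?_, ?_⟩
    · intro k
      have : ((fun _ : ℝ => (0 : Fin 1)) ⁻¹' {k}) = Set.univ := by
        ext z; simp [Subsingleton.elim k 0]
      rw [this]
      exact Set.ordConnected_univ
    · intro k l hl
      omega
  | succ i ih =>
    obtain ⟨P, C, hP, hC, hA⟩ := ih
    choose! A B hAB using hA
    -- the pre-activations are affine on each piece
    let pa : Fin P → Fin (N.width i) → ℝ := fun k u =>
      (∑ m, N.Win i u m * (y m - x m)) + ∑ j : Fin i, ∑ m, N.W i j u m * A k j m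
    let pb : Fin P → Fin (N.width i) → ℝ := fun k u =>
      (∑ m, N.Win i u m * x m) + (∑ j : Fin i, ∑ m, N.W i j u m * B k j m) + N.b i u
    have hpre : ∀ s u, N.layer σ ((1 - s) • x + s • y) i u
        = σ (pa (C s) u * s + pb (C s) u) := by
      intro s u
      rw [LayeredNet.layer]
      show σ _ = σ _
      congr 1
      have e1 : ∑ m, N.Win i u m * ((1 - s) • x + s • y) m
          = (∑ m, N.Win i u m * (y m - x m)) * s + ∑ m, N.Win i u m * x m := by
        rw [Finset.sum_mul, ← Finset.sum_add_distrib]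
        refine Finset.sum_congr rfl fun m _ => ?_
        simp only [PiLp.add_apply, PiLp.smul_apply, smul_eq_mul]
        ring
      have e2 : ∑ j : Fin i, ∑ m, N.W i j u m * N.layer σ ((1 - s) • x + s • y) j m
          = (∑ j : Fin i, ∑ m, N.W i j u m * A (C s) j m) * s
            + ∑ j : Fin i, ∑ m, N.W i j u m * B (C s) j m := by
        rw [Finset.sum_mul, ← Finset.sum_add_distrib]
        refine Finset.sum_congr rfl fun j _ => ?_
        rw [Finset.sum_mul, ← Finset.sum_add_distrib]
        refine Finset.sum_congr rfl fun m _ => ?_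
        rw [hAB (C s) j j.isLt m s rfl]
        ring
      rw [e1, e2]
      simp only [pa, pb]
      ring
    choose M hM hMl using fun k =>
      refine_layer (σ := σ) lab hmono hle hl (N.width i) (pa k) (pb k)
    let D : ℝ → Fin (P * (T * N.width i + 1)) := fun s => finProdFinEquiv (C s, M (C s) s)
    have hD : ∀ k s, D s = k ↔
        C s = (finProdFinEquiv.symm k).1 ∧
          M (finProdFinEquiv.symm k).1 s = (finProdFinEquiv.symm k).2 := by
      intro k s
      simp only [D]
      rw [← Equiv.eq_symm_apply, Prod.ext_iff]
      constructor
      · rintro ⟨h1, h2⟩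
        refine ⟨h1, ?_⟩
        rw [← h1]
        exact h2
      · rintro ⟨h1, h2⟩
        refine ⟨h1, ?_⟩
        rw [← h1] at h2
        exact h2
    refine ⟨P * (T * N.width i + 1), D, ?_, ?_, ?_⟩
    · rw [Finset.prod_range_succ, hP]
    · intro k
      have : D ⁻¹' {k} = C ⁻¹' {(finProdFinEquiv.symm k).1} ∩
          (M (finProdFinEquiv.symm k).1) ⁻¹' {(finProdFinEquiv.symm k).2} := by
        ext s
        exact hD k s
      rw [this]
      exact (hC _).inter (Set.ordConnected_singleton.preimage_mono (hM _))
    · intro k l hl m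
      rcases Nat.lt_succ_iff_lt_or_eq.1 hl with h | h
      · exact ⟨_, _, fun s hs => hAB _ l h m s ((hD k s).1 hs).1⟩
      · subst h
        obtain ⟨a', b', h'⟩ := hMl (finProdFinEquiv.symm k).1 (finProdFinEquiv.symm k).2 m
        refine ⟨a', b', fun s hs => ?_⟩
        obtain ⟨h1, h2⟩ := (hD k s).1 hs
        rw [hpre, h1]
        exact h' s h2

lemma eval_pieces {n : ℕ} (N : LayeredNet n) {σ : ℝ → ℝ} {t : ℕ} (ht : 1 ≤ t)
    (hσ : PiecewiseLinear σ t) (x y : EuclideanSpace ℝ (Fin n)) :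
    ∃ (P : ℕ) (C : ℝ → Fin P),
      P = ∏ l ∈ Finset.range N.depth, ((t - 1) * N.width l + 1) ∧
      (∀ k, (C ⁻¹' {k}).OrdConnected) ∧
      ∀ k, ∃ a b : ℝ, ∀ s, C s = k → N.eval σ ((1 - s) • x + s • y) = a * s + b := by
  obtain ⟨I, h1, h2, h3, h4, h5⟩ := hσ
  obtain ⟨lab, hmono, hle, hl⟩ := exists_lab ht I h1 h2 h3 h4 h5
  obtain ⟨P, C, hP, hC, hA⟩ := net_pieces N lab hmono hle hl x y N.depth
  refine ⟨P, C, hP, hC, fun k => ?_⟩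
  choose! A B hAB using hA
  refine ⟨(∑ m, N.cin m * (y m - x m)) + ∑ i ∈ Finset.range N.depth, ∑ m, N.c i m * A k i m,
    (∑ m, N.cin m * x m) + (∑ i ∈ Finset.range N.depth, ∑ m, N.c i m * B k i m) + N.c0,
    fun s hs => ?_⟩
  have e1 : ∑ m, N.cin m * ((1 - s) • x + s • y) m
      = (∑ m, N.cin m * (y m - x m)) * s + ∑ m, N.cin m * x m := by
    rw [Finset.sum_mul, ← Finset.sum_add_distrib]
    refine Finset.sum_congr rfl fun m _ => ?_
    simp only [PiLp.add_apply, PiLp.smul_apply, smul_eq_mul]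
    ring
  have e2 : ∑ i ∈ Finset.range N.depth, ∑ m, N.c i m * N.layer σ ((1 - s) • x + s • y) i m
      = (∑ i ∈ Finset.range N.depth, ∑ m, N.c i m * A k i m) * s
        + ∑ i ∈ Finset.range N.depth, ∑ m, N.c i m * B k i m := by
    rw [Finset.sum_mul, ← Finset.sum_add_distrib]
    refine Finset.sum_congr rfl fun j hj => ?_
    rw [Finset.sum_mul, ← Finset.sum_add_distrib]
    refine Finset.sum_congr rfl fun m _ => ?_
    rw [hAB k j (Finset.mem_range.1 hj) m s hs]
    ring
  unfold LayeredNet.eval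
  rw [e1, e2]
  ring

lemma hess_quad {n : ℕ} (g : EuclideanSpace ℝ (Fin n) → ℝ) (z v : EuclideanSpace ℝ (Fin n)) :
    fderiv ℝ (fderiv ℝ g) z v v = v.ofLp ⬝ᵥ ((hess g z).mulVec v.ofLp) := by
  have hv : v = ∑ i, v i • EuclideanSpace.single i (1:ℝ) := by
    ext j
    simp [Finset.sum_apply, Pi.single_apply]
  conv_lhs => rw [hv]
  simp only [map_sum, map_smul, sum_apply, smul_apply,
    smul_eq_mul, dotProduct, Matrix.mulVec, hess, iteratedFDeriv_two_apply]
  simp only [Finset.mul_sum, Matrix.cons_val_zero, Matrix.cons_val_one]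
  rw [Finset.sum_comm]
  refine Finset.sum_congr rfl fun i _ => Finset.sum_congr rfl fun j _ => ?_
  ring

lemma hess_bound {n : ℕ} (g : EuclideanSpace ℝ (Fin n) → ℝ) (z v : EuclideanSpace ℝ (Fin n))
    (hg : ContDiffAt ℝ 2 g z) (m : ℝ) (hm : 0 < m)
    (h : m ≤ max 0 (Real.sign (lamMax (hess g z) * lamMin (hess g z)) *
        min |lamMax (hess g z)| |lamMin (hess g z)|)) :
    m * ‖v‖ ^ 2 ≤ fderiv ℝ (fderiv ℝ g) z v v ∨
      fderiv ℝ (fderiv ℝ g) z v v ≤ - (m * ‖v‖ ^ 2) := by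
  have hsymm : (hess g z).IsHermitian := by
    have hs := hg.isSymmSndFDerivAt (by simp)
    ext i j
    simp only [Matrix.conjTranspose_apply, hess, iteratedFDeriv_two_apply, star_trivial]
    exact hs _ _
  have hfin : (spectrum ℝ (hess g z)).Finite := (hess g z).finite_real_spectrum
  have hn : v.ofLp ⬝ᵥ v.ofLp = ‖v‖ ^ 2 := by
    rw [EuclideanSpace.real_norm_sq_eq]
    simp [dotProduct, sq]
  rw [hess_quad, ← hn]
  have hpos : 0 < lamMax (hess g z) * lamMin (hess g z) := by
    by_contra hcon
    push Not at hcon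
    have : Real.sign (lamMax (hess g z) * lamMin (hess g z)) ≤ 0 := by
      rcases hcon.lt_or_eq with h1 | h1
      · rw [Real.sign_of_neg h1]; norm_num
      · rw [h1]; simp
    have h2 : Real.sign (lamMax (hess g z) * lamMin (hess g z)) *
        min |lamMax (hess g z)| |lamMin (hess g z)| ≤ 0 :=
      mul_nonpos_of_nonpos_of_nonneg this (by positivity)
    rw [max_eq_left h2] at h
    linarith
  rw [Real.sign_of_pos hpos, one_mul, max_eq_right (by positivity)] at h
  have hM := h.trans (min_le_left _ _)
  have hm' := h.trans (min_le_right _ _)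
  have hv0 : 0 ≤ v.ofLp ⬝ᵥ v.ofLp := by rw [hn]; positivity
  rcases mul_pos_iff.1 hpos with ⟨h1, h2⟩ | ⟨h1, h2⟩
  · left
    rw [abs_of_pos h2] at hm'
    exact quad_lower _ hsymm _ m (fun μ hμ => hm'.trans (csInf_le hfin.bddBelow hμ))
  · right
    rw [abs_of_neg h1] at hM
    have := quad_lower (-(hess g z)) hsymm.neg v.ofLp m (fun μ hμ => by
      rw [← spectrum.neg_eq] at hμ
      have := le_csSup hfin.bddAbove (Set.mem_neg.1 hμ)
      unfold lamMax at hM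
      linarith)
    rw [Matrix.neg_mulVec, dotProduct_neg] at this
    linarith

lemma sign_const (q : ℝ → ℝ) (c : ℝ) (hc : 0 < c) (hq : ContinuousOn q (Set.Icc (0:ℝ) 1))
    (h : ∀ s ∈ Set.Icc (0:ℝ) 1, c ≤ q s ∨ q s ≤ -c) :
    (∀ s ∈ Set.Icc (0:ℝ) 1, c ≤ q s) ∨ (∀ s ∈ Set.Icc (0:ℝ) 1, q s ≤ -c) := by
  by_contra hcon
  push Not at hcon
  obtain ⟨⟨s, hs, h1⟩, ⟨s', hs', h2⟩⟩ := hcon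
  have h1' : q s ≤ 0 := by
    rcases h s hs with h | h <;> linarith
  have h2' : 0 ≤ q s' := by
    rcases h s' hs' with h | h <;> linarith
  obtain ⟨u, hu, hu0⟩ := isPreconnected_Icc.intermediate_value hs hs' hq ⟨h1', h2'⟩
  rcases h u hu with h | h <;> linarith

/-- Theorem 1: if a layered feedforward network with piecewise linear activation
(`t` pieces) ε-approximates a C² function `g` on a compact convex set `R`, then
`((t − 1)·ω + 1)^d ≥ (‖x − y‖₂ / (4√ε)) · Ψ(g, x, y)` for all `x, y ∈ R`. -/
theorem network_approx_lower_bound {n : ℕ}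
    (R : Set (EuclideanSpace ℝ (Fin n))) (hRc : IsCompact R) (hR : Convex ℝ R)
    (U : Set (EuclideanSpace ℝ (Fin n))) (hU : IsOpen U) (hRU : R ⊆ U)
    (g : EuclideanSpace ℝ (Fin n) → ℝ) (hg : ContDiffOn ℝ 2 g U)
    (ε : ℝ) (hε : 0 < ε)
    (N : LayeredNet n) (hd : 1 ≤ N.depth) (hw : ∀ i < N.depth, 1 ≤ N.width i)
    (σ : ℝ → ℝ) (t : ℕ) (ht : 1 ≤ t) (hσ : PiecewiseLinear σ t)
    (hf : ∀ z ∈ R, |N.eval σ z - g z| ≤ ε)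
    (x y : EuclideanSpace ℝ (Fin n)) (hx : x ∈ R) (hy : y ∈ R) :
    (((t : ℝ) - 1) * ((N.numHidden : ℝ) / (N.depth : ℝ)) + 1) ^ N.depth ≥
      (‖x - y‖ / (4 * Real.sqrt ε)) * Psi g x y := by
  have hω : (0:ℝ) ≤ (((t : ℝ) - 1) * ((N.numHidden : ℝ) / (N.depth : ℝ)) + 1) := by
    have : (1:ℝ) ≤ t := by exact_mod_cast ht
    have : 0 ≤ (t:ℝ) - 1 := by linarith
    positivity
  obtain ⟨P, C, hP, hC, hA⟩ := eval_pieces N ht hσ x y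
  -- number of pieces
  have hPle : (P : ℝ) ≤ (((t : ℝ) - 1) * ((N.numHidden : ℝ) / (N.depth : ℝ)) + 1) ^ N.depth := by
    have h := amgm N.depth hd (fun l => ((t:ℝ) - 1) * N.width l + 1) (fun i => by
      have : (1:ℝ) ≤ t := by exact_mod_cast ht
      have : 0 ≤ (t:ℝ) - 1 := by linarith
      positivity)
    have hd0 : (N.depth : ℝ) ≠ 0 := by
      have : N.depth ≠ 0 := by omega
      exact_mod_cast this
    rw [hP]
    push_cast [Nat.cast_sub ht]
    refine h.trans (le_of_eq ?_)
    congr 1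
    rw [Finset.sum_add_distrib, ← Finset.mul_sum]
    simp only [LayeredNet.numHidden, Finset.sum_const, Finset.card_range, nsmul_eq_mul, mul_one,
      Nat.cast_sum]
    field_simp
  have hPpos : 0 < P := (C 0).pos
  have hPR : (0:ℝ) < P := by exact_mod_cast hPpos
  refine ge_iff_le.2 (le_trans ?_ hPle)
  unfold Psi
  set S := ((fun α : ℝ =>
      max 0 (Real.sign (lamMax (hess g ((1 - α) • x + α • y)) *
          lamMin (hess g ((1 - α) • x + α • y))) *
        min |lamMax (hess g ((1 - α) • x + α • y))|
            |lamMin (hess g ((1 - α) • x + α • y))|)) '' Set.Icc (0 : ℝ) 1) with hS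
  have hbdd : BddBelow S := ⟨0, by
    rintro _ ⟨α, _, rfl⟩
    exact le_max_left _ _⟩
  set m := sInf S with hmdef
  by_cases hm : m ≤ 0
  · rw [Real.sqrt_eq_zero_of_nonpos hm, mul_zero]
    exact hPR.le
  push Not at hm
  by_cases hxy : x = y
  · rw [hxy, sub_self, norm_zero, zero_div, zero_mul]
    exact hPR.le
  have hnorm : 0 < ‖y - x‖ := norm_pos_iff.2 (sub_ne_zero.2 (Ne.symm hxy))
  let z : ℝ → EuclideanSpace ℝ (Fin n) := fun s => (1 - s) • x + s • y
  have hzR : ∀ s ∈ Set.Icc (0:ℝ) 1, z s ∈ R := fun s hs =>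
    hR hx hy (by linarith [hs.2]) hs.1 (by ring)
  have hgat : ∀ s ∈ Set.Icc (0:ℝ) 1, ContDiffAt ℝ 2 g (z s) := fun s hs =>
    hg.contDiffAt (hU.mem_nhds (hRU (hzR s hs)))
  have hzd : ∀ s, HasDerivAt z (y - x) s := by
    intro s
    have h1 := ((hasDerivAt_const s (1:ℝ)).sub (hasDerivAt_id s)).smul_const x
    have h2 := (hasDerivAt_id s).smul_const y
    refine (h1.add h2).congr_deriv ?_
    simp only [zero_sub, neg_smul, one_smul]
    abel
  have hzc : Continuous z := continuous_iff_continuousAt.2 fun s => (hzd s).continuousAt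
  let v := y - x
  let G : ℝ → ℝ := fun s => g (z s)
  let G' : ℝ → ℝ := fun s => fderiv ℝ g (z s) v
  let G'' : ℝ → ℝ := fun s => fderiv ℝ (fderiv ℝ g) (z s) v v
  have hG1 : ∀ s ∈ Set.Icc (0:ℝ) 1, HasDerivAt G (G' s) s := by
    intro s hs
    exact ((hgat s hs).differentiableAt (by norm_num)).hasFDerivAt.comp_hasDerivAt s (hzd s)
  have hfd : ∀ s ∈ Set.Icc (0:ℝ) 1, ContDiffAt ℝ 1 (fderiv ℝ g) (z s) := fun s hs =>
    (hgat s hs).fderiv_right (by norm_num)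
  have hG2 : ∀ s ∈ Set.Icc (0:ℝ) 1, HasDerivAt G' (G'' s) s := by
    intro s hs
    have h := ((hfd s hs).differentiableAt (by norm_num)).hasFDerivAt.comp_hasDerivAt s (hzd s)
    exact ((ContinuousLinearMap.apply ℝ ℝ v).hasFDerivAt.comp_hasDerivAt s h)
  have hG2c : ContinuousOn G'' (Set.Icc (0:ℝ) 1) := by
    intro s hs
    have h0 : ContDiffAt ℝ 0 (fderiv ℝ (fderiv ℝ g)) (z s) :=
      (hfd s hs).fderiv_right (by norm_num)
    have h1 : ContinuousAt (fun s => fderiv ℝ (fderiv ℝ g) (z s)) s :=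
      ContinuousAt.comp (f := z) h0.continuousAt hzc.continuousAt
    exact ((h1.clm_apply continuousAt_const).clm_apply continuousAt_const).continuousWithinAt
  have hcpos : 0 < m * ‖v‖ ^ 2 := by positivity
  have hsgn := sign_const G'' (m * ‖v‖ ^ 2) hcpos hG2c (fun s hs =>
    hess_bound g (z s) v (hgat s hs) m hm (csInf_le hbdd ⟨s, hs, rfl⟩))
  -- pigeonhole
  obtain ⟨i, j, hij, hCij⟩ : ∃ i j : Fin (P + 1), i ≠ j ∧
      C ((i : ℕ) / (P:ℝ)) = C ((j : ℕ) / (P:ℝ)) :=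
    Fintype.exists_ne_map_eq_of_card_lt (fun i : Fin (P + 1) => C ((i : ℕ) / (P:ℝ))) (by simp)
  have hmem : ∀ i : Fin (P + 1), ((i : ℕ) / (P:ℝ)) ∈ Set.Icc (0:ℝ) 1 := by
    intro i
    refine ⟨by positivity, ?_⟩
    rw [div_le_one hPR]
    exact_mod_cast Nat.lt_succ_iff.1 i.isLt
  have hdist : 1 / (P:ℝ) ^ 2 ≤ ((j : ℕ) / (P:ℝ) - (i : ℕ) / (P:ℝ)) ^ 2 := by
    rw [← sub_div, div_pow]
    gcongr
    have h1 : ((j : ℕ) : ℤ) - ((i : ℕ) : ℤ) ≠ 0 := by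
      intro h
      apply hij
      ext
      omega
    have h2 := Int.one_le_abs h1
    have h3 : (1:ℤ) ≤ (((j : ℕ) : ℤ) - ((i : ℕ) : ℤ)) ^ 2 := by
      rw [← sq_abs]; nlinarith
    exact_mod_cast h3
  generalize ha : (((i : ℕ) : ℝ) / (P:ℝ)) = a at *
  generalize hb : (((j : ℕ) : ℝ) / (P:ℝ)) = b at *
  have ha1 : a ∈ Set.Icc (0:ℝ) 1 := ha ▸ hmem i
  have hb1 : b ∈ Set.Icc (0:ℝ) 1 := hb ▸ hmem j
  have hmid : (a + b) / 2 ∈ Set.uIcc a b := by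
    rw [Set.mem_uIcc]
    rcases le_total a b with h | h
    · left; constructor <;> linarith
    · right; constructor <;> linarith
  have hCm : C ((a + b) / 2) = C a :=
    (hC (C a)).uIcc_subset (show a ∈ C ⁻¹' {C a} from rfl) (show b ∈ C ⁻¹' {C a} from hCij.symm)
      hmid
  have hm1 : (a + b) / 2 ∈ Set.Icc (0:ℝ) 1 := by
    constructor <;> linarith [ha1.1, ha1.2, hb1.1, hb1.2]
  obtain ⟨p, q, hpq⟩ := hA (C a)
  have fa := abs_le.1 (hf _ (hzR a ha1))
  have fb := abs_le.1 (hf _ (hzR b hb1))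
  have fm := abs_le.1 (hf _ (hzR _ hm1))
  rw [show N.eval σ (z a) = p * a + q from hpq a rfl] at fa
  rw [show N.eval σ (z b) = p * b + q from hpq b hCij.symm] at fb
  rw [show N.eval σ (z ((a + b) / 2)) = p * ((a + b) / 2) + q from hpq _ hCm] at fm
  have hkey : m * ‖v‖ ^ 2 / 4 * (b - a) ^ 2 ≤ 4 * ε := by
    rcases hsgn with h | h
    · have := midpoint_strong G G' G'' _ hG1 hG2 h a b ha1 hb1
      simp only [G] at this
      linarith [fa.1, fa.2, fb.1, fb.2, fm.1, fm.2]
    · have := midpoint_strong (fun s => - G s) (fun s => - G' s) (fun s => - G'' s) (m * ‖v‖ ^ 2)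
        (fun s hs => (hG1 s hs).neg) (fun s hs => (hG2 s hs).neg)
        (fun s hs => by linarith [h s hs]) a b ha1 hb1
      simp only [G] at this
      linarith [fa.1, fa.2, fb.1, fb.2, fm.1, fm.2]
  have hfin : m * ‖v‖ ^ 2 ≤ 16 * ε * (P:ℝ) ^ 2 := by
    have h1 : m * ‖v‖ ^ 2 / 4 * (1 / (P:ℝ) ^ 2) ≤ 4 * ε :=
      (mul_le_mul_of_nonneg_left hdist (by positivity)).trans hkey
    rw [mul_one_div, div_le_iff₀ (by positivity)] at h1
    linarith
  rw [norm_sub_rev, div_mul_eq_mul_div, div_le_iff₀ (by positivity)]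
  refine (sq_le_sq₀ (by positivity) (by positivity)).1 ?_
  rw [mul_pow, mul_pow, mul_pow, Real.sq_sqrt hm.le, Real.sq_sqrt hε.le]
  have : ‖v‖ = ‖y - x‖ := rfl
  rw [this] at hfin
  linarith
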